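/- arXiv:1707.01528 — 3 statements merged into one kernel-verified Lean document; each statement's English description precedes it below -/
import Mathlib

section
/- Elliptic Gibbons–Tsarev compatibility identity (Section 4): Let σ lie in the complex upper half-plane and let u, x, y ∈ ℂ be such that none of the points x, y, x−y, u+x, u+y lies in the lattice ℤ + σℤ. Then [℘₁(u+y,σ) − ℘₁(y,σ)]·[ζ₁(x−y,σ) − ζ₁(x,σ)] − [℘₁(u+x,σ) − ℘₁(x,σ)]·[ζ₁(y−x,σ) − ζ₁(y,σ)] + 2℘₁(y−x,σ)·[−ζ₁(u+y,σ) + ζ₁(y,σ) + ζ₁(u+x,σ) − ζ₁(x,σ)] + (1/2)[℘₁'(u+y,σ) − ℘₁'(u+x,σ) − ℘₁'(y,σ) + ℘₁'(x,σ)] + [ζ₁(u+y,σ) − ζ₁(u+x,σ) + ζ₁(x,σ)]·℘₁(u+y,σ) − [ζ₁(u+x,σ) − ζ₁(u+y,σ) + ζ₁(y,σ)]·℘₁(u+x,σ) − ζ₁(y,σ)℘₁(y,σ) + ζ₁(x,σ)℘₁(x,σ) = 0. (With x = ξ_j, y = ξ_k and σ = τ/2, this identity expresses the vanishing of F_{jk}(u),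 i.e., the compatibility of the system of elliptic Löwner equations under the elliptic Gibbons–Tsarev system.) -/
open Complex

/-- Jacobi theta function θ₁(u,τ). -/
noncomputable def theta1 (u τ : ℂ) : ℂ :=
  -∑' k : ℤ, Complex.exp ((Real.pi : ℂ) * Complex.I * τ * ((k : ℂ) + 1/2)^2
      + 2 * (Real.pi : ℂ) * Complex.I * (u + 1/2) * ((k : ℂ) + 1/2))

/-- Jacobi theta function θ₂(u,τ). -/
noncomputable def theta2 (u τ : ℂ) : ℂ :=
  ∑' k : ℤ, Complex.exp ((Real.pi : ℂ) * Complex.I * τ * ((k : ℂ) + 1/2)^2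
      + 2 * (Real.pi : ℂ) * Complex.I * u * ((k : ℂ) + 1/2))

/-- Jacobi theta function θ₃(u,τ). -/
noncomputable def theta3 (u τ : ℂ) : ℂ :=
  ∑' k : ℤ, Complex.exp ((Real.pi : ℂ) * Complex.I * τ * (k : ℂ)^2
      + 2 * (Real.pi : ℂ) * Complex.I * u * (k : ℂ))

/-- Jacobi theta function θ₄(u,τ). -/
noncomputable def theta4 (u τ : ℂ) : ℂ :=
  ∑' k : ℤ, Complex.exp ((Real.pi : ℂ) * Complex.I * τ * (k : ℂ)^2
      + 2 * (Real.pi : ℂ) * Complex.I * (u + 1/2) * (k : ℂ))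

/-- ζ_a(u,τ) = θ_a'(u,τ)/θ_a(u,τ). -/
noncomputable def zeta1 (u τ : ℂ) : ℂ := deriv (fun v => theta1 v τ) u / theta1 u τ
noncomputable def zeta2 (u τ : ℂ) : ℂ := deriv (fun v => theta2 v τ) u / theta2 u τ
noncomputable def zeta3 (u τ : ℂ) : ℂ := deriv (fun v => theta3 v τ) u / theta3 u τ
noncomputable def zeta4 (u τ : ℂ) : ℂ := deriv (fun v => theta4 v τ) u / theta4 u τ

/-- ℘_a(u,τ) = −∂_u ζ_a(u,τ). -/
noncomputable def wp1 (u τ : ℂ) : ℂ := -deriv (fun v => zeta1 v τ) u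
noncomputable def wp2 (u τ : ℂ) : ℂ := -deriv (fun v => zeta2 v τ) u
noncomputable def wp1' (u τ : ℂ) : ℂ := deriv (fun v => wp1 v τ) u
noncomputable def wp2' (u τ : ℂ) : ℂ := deriv (fun v => wp2 v τ) u

/-- S'(u,τ) = ζ₁(u,τ) − ζ₄(u,τ). -/
noncomputable def Sp (u τ : ℂ) : ℂ := zeta1 u τ - zeta4 u τ
/-- S''(u,τ) = ∂_u S'(u,τ). -/
noncomputable def Spp (u τ : ℂ) : ℂ := deriv (fun v => Sp v τ) u
/-- S'''(u,τ) = ∂_u S''(u,τ). -/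
noncomputable def Sppp (u τ : ℂ) : ℂ := deriv (fun v => Spp v τ) u

/-- Partial derivative in the j-th coordinate of a ℂ-valued function on ℝ^N. -/
noncomputable def pdC {N : ℕ} (j : Fin N) (f : (Fin N → ℝ) → ℂ) (x : Fin N → ℝ) : ℂ :=
  fderiv ℝ f x (Pi.single j 1)

/-- Partial derivative in the j-th coordinate of an ℝ-valued function on ℝ^d. -/
noncomputable def pd {d : ℕ} (j : Fin d) (f : (Fin d → ℝ) → ℝ) (x : Fin d → ℝ) : ℝ :=
  fderiv ℝ f x (Pi.single j 1)

/-- A point of ℂ lies in the lattice ℤ + σℤ. -/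
def InLattice (σ z : ℂ) : Prop := ∃ m n : ℤ, z = (m : ℂ) + (n : ℂ) * σ

/-!
The proof rests on Weierstrass' three-term relation for `t = θ₁(·, σ)`. Regrouping the double series
`θ₁(a + b, σ) θ₁(a - b, σ)` according to parity writes it as the `2 × 2` determinant
`θ₃(2a, 2σ) θ₂(2b, 2σ) - θ₂(2a, 2σ) θ₃(2b, 2σ)`, and the three-term relation is the Plücker relation
between such determinants.

Everything else follows from the three-term relation and the quasi-periodicity of `t`:
* if `t z = 0`, the relation loses one term and says that `t (p + z) / t p` is an exponential in `p`;
  comparing with the quasi-periods of `t` puts `z` in the lattice;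
* its second derivative in one variable is the factorization of `℘ a - ℘ b`, whose derivative
  along the diagonal is the addition theorem for `ζ`;
* by the addition theorem, the expression
  `(℘ a + ℘ b) (ζ (a - b) - ζ a + ζ b) + 2 ℘ (a - b) (ζ a - ζ b) - (℘' a - ℘' b) / 2`
  depends only on `a - b`, and the identity compares its values at `(u + x, u + y)` and `(x, y)`.
-/

section Deriv

variable {𝕜 F : Type*} [NontriviallyNormedField 𝕜] [NormedAddCommGroup F] [NormedSpace 𝕜 F]

lemma odd_deriv_of_even {f : 𝕜 → F} (hf : f.Even) : (deriv f).Odd := fun z => by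
  rw [← neg_eq_iff_eq_neg, ← deriv_comp_neg, funext hf]

lemma even_deriv_of_odd {f : 𝕜 → F} (hf : f.Odd) : (deriv f).Even := fun z => by
  rw [← neg_inj, ← deriv_comp_neg, funext hf, deriv.fun_neg]

lemma odd_logDeriv_of_odd {f : 𝕜 → 𝕜} (hf : f.Odd) : (logDeriv f).Odd := fun z => by
  rw [logDeriv_apply, logDeriv_apply, even_deriv_of_odd hf, hf, div_neg]

lemma hasDerivAt_logDeriv_mul {f : 𝕜 → 𝕜} {z : 𝕜} (hf : DifferentiableAt 𝕜 f z) (hz : f z ≠ 0) :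
    HasDerivAt f (logDeriv f z * f z) z := by
  rw [logDeriv_apply, div_mul_cancel₀ _ hz]
  exact hf.hasDerivAt

lemma deriv_comp_const_add_mul_comp_const_sub {f g : 𝕜 → 𝕜} (hf : Differentiable 𝕜 f)
    (hg : Differentiable 𝕜 g) (b : 𝕜) : deriv (fun c => f (b + c) * g (b - c)) =
      fun c => deriv f (b + c) * g (b - c) - f (b + c) * deriv g (b - c) := by
  funext c
  rw [deriv_fun_mul (by fun_prop) (by fun_prop), deriv_comp_const_add, deriv_comp_const_sub]
  ring

end Deriv

section EntireFunctions

lemma deriv_deriv_comp_const_add_mul_comp_const_sub {t : ℂ → ℂ} (ht : Differentiable ℂ t) (b : ℂ) :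
    deriv (deriv fun c => t (b + c) * t (b - c)) 0 =
      2 * (deriv (deriv t) b * t b - deriv t b ^ 2) := by
  have ht' := ht.deriv
  rw [deriv_comp_const_add_mul_comp_const_sub ht ht, deriv_fun_sub (by fun_prop) (by fun_prop),
    deriv_comp_const_add_mul_comp_const_sub ht' ht, deriv_comp_const_add_mul_comp_const_sub ht ht']
  simp only [add_zero, sub_zero]
  ring

lemma exists_mul_ne_zero_of_differentiable {f g : ℂ → ℂ} (hf : Differentiable ℂ f)
    (hg : Differentiable ℂ g) (hf0 : ∃ u, f u ≠ 0) (hg0 : ∃ u, g u ≠ 0) : ∃ q, f q * g q ≠ 0 := by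
  by_contra! h
  rcases AnalyticOnNhd.eq_zero_or_eq_zero_of_mul_eq_zero
    (analyticOnNhd_univ_iff_differentiable.2 hf) (analyticOnNhd_univ_iff_differentiable.2 hg)
    (fun z _ => h z) isPreconnected_univ with hzero | hzero
  · exact hf0.elim fun u hu => hu (hzero u trivial)
  · exact hg0.elim fun u hu => hu (hzero u trivial)

lemma exists_eq_mul_exp_mul_of_logDeriv {f g : ℂ → ℂ} {α q : ℂ} (hf : Differentiable ℂ f)
    (hg : Differentiable ℂ g) (hfq : f q ≠ 0) (hgq : g q ≠ 0)
    (h : ∀ p, f p ≠ 0 → g p ≠ 0 → logDeriv f p = α + logDeriv g p) :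
    ∃ β, ∀ p, f p = β * exp (α * p) * g p := by
  obtain ⟨ε, hε, hball⟩ := Metric.eventually_nhds_iff_ball.1
    ((hf.continuous.continuousAt.eventually_ne hfq).and
      (hg.continuous.continuousAt.eventually_ne hgq))
  let e : ℂ → ℂ := fun p => exp (α * p) * g p
  have he : Differentiable ℂ e := by fun_prop
  have hlog : Set.EqOn (logDeriv f) (logDeriv e) (Metric.ball q ε) := fun p hp => by
    have hexp : HasDerivAt (fun p => exp (α * p)) (exp (α * p) * α) p := by
      simpa using ((hasDerivAt_id p).const_mul α).cexp
    have hlog_exp : logDeriv (fun p => exp (α * p)) p = α := by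
      rw [logDeriv_apply, hexp.deriv, mul_div_cancel_left₀ _ (exp_ne_zero _)]
    rw [h p (hball p hp).1 (hball p hp).2, logDeriv_mul (f := fun p => exp (α * p)) p
      (exp_ne_zero _) (hball p hp).2 hexp.differentiableAt hg.differentiableAt, hlog_exp]
  obtain ⟨β, -, hβ⟩ := (logDeriv_eqOn_iff hf.differentiableOn he.differentiableOn
    Metric.isOpen_ball (convex_ball q ε).isPreconnected
    (fun p hp => mul_ne_zero (exp_ne_zero _) (hball p hp).2) (fun p hp => (hball p hp).1)).1 hlog
  have hglobal : f = β • e := AnalyticOnNhd.eq_of_eventuallyEq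
    (analyticOnNhd_univ_iff_differentiable.2 hf)
    (analyticOnNhd_univ_iff_differentiable.2 (he.const_smul β))
    (hβ.eventuallyEq_of_mem (Metric.ball_mem_nhds q hε))
  exact ⟨β, fun p => by rw [hglobal, Pi.smul_apply, smul_eq_mul, mul_assoc]⟩

end EntireFunctions

/-- Minus the second logarithmic derivative of `t`. For `t = θ₁(·, σ)` it is `℘₁(·, σ)`, and
`logDeriv t` is `ζ₁(·, σ)`. Like `logDeriv`, it is a junk value at the zeros of `t`. -/
noncomputable def logWeierstrassP (t : ℂ → ℂ) : ℂ → ℂ := -deriv (logDeriv t)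

lemma even_logWeierstrassP {t : ℂ → ℂ} (ht : t.Odd) : (logWeierstrassP t).Even := fun z =>
  congrArg Neg.neg (even_deriv_of_odd (odd_logDeriv_of_odd ht) z)

lemma differentiableAt_logWeierstrassP {t : ℂ → ℂ} {z : ℂ} (ht : Differentiable ℂ t)
    (hz : t z ≠ 0) : DifferentiableAt ℂ (logWeierstrassP t) z :=
  ((ht.analyticAt z).deriv.div (ht.analyticAt z) hz).deriv.neg.differentiableAt

lemma logWeierstrassP_mul_sq {t : ℂ → ℂ} {z : ℂ} (ht : Differentiable ℂ t) (hz : t z ≠ 0) :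
    logWeierstrassP t z * t z ^ 2 = deriv t z ^ 2 - deriv (deriv t) z * t z := by
  rw [logWeierstrassP, Pi.neg_apply, logDeriv,
    deriv_div ht.deriv.differentiableAt ht.differentiableAt hz]
  field_simp
  ring

/-- Weierstrass' three-term relation, satisfied by the `σ`-functions and by `θ₁`. -/
def ThreeTermRelation (t : ℂ → ℂ) : Prop :=
  ∀ a b c d, t (a + b) * t (a - b) * (t (c + d) * t (c - d)) +
    t (b + c) * t (b - c) * (t (a + d) * t (a - d)) +
    t (c + a) * t (c - a) * (t (b + d) * t (b - d)) = 0

-- This is the Plücker relation for the determinants `f a * g b - g a * f b`.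
lemma threeTermRelation_of_add_mul_sub {t f g : ℂ → ℂ}
    (h : ∀ a b, t (a + b) * t (a - b) = f a * g b - g a * f b) : ThreeTermRelation t := by
  intro a b c d
  simp only [h]
  ring

namespace ThreeTermRelation

variable {t : ℂ → ℂ}

lemma map_zero (h : ThreeTermRelation t) : t 0 = 0 := by
  have h0 := h 0 0 0 0
  simp only [add_zero, sub_zero] at h0
  exact pow_eq_zero_iff (n := 4) four_ne_zero |>.1 (by linear_combination (1 / 3 : ℂ) * h0)

lemma odd (h : ThreeTermRelation t) : t.Odd := by
  have hsum_mul : ∀ z, (t z + t (-z)) * t z ^ 3 = 0 := fun z => by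
    have hz := h 0 z z 0
    simp only [add_zero, zero_add, sub_zero, zero_sub, sub_self, h.map_zero] at hz
    linear_combination hz
  intro z
  rw [eq_neg_iff_add_eq_zero, add_comm]
  by_contra hne
  have hz : t z = 0 := by simpa using (mul_eq_zero.1 (hsum_mul z)).resolve_left hne
  have hnz : t (-z) = 0 := by
    simpa using (mul_eq_zero.1 (hsum_mul (-z))).resolve_left (by rwa [neg_neg, add_comm])
  exact hne (by rw [hz, hnz, add_zero])

-- The term of the three-term relation containing the factor `t z` drops out.
lemma mul_translate_eq (h : ThreeTermRelation t) {z : ℂ} (hz : t z = 0) (p q s : ℂ) :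
    t (p + z + s) * t (q + s) * (t p * t (q + z)) =
      t (p + s) * t (q + z + s) * (t (p + z) * t q) := by
  have hrel := h ((p + q + s) / 2 + z) ((p - q + s) / 2) ((p + q + s) / 2) ((p - q - s) / 2)
  have hnz : t (-z) = 0 := by rw [h.odd, hz, neg_zero]
  ring_nf at hrel hnz ⊢
  rw [hnz, h.odd] at hrel
  linear_combination hrel

lemma logDeriv_translate (h : ThreeTermRelation t) (ht : Differentiable ℂ t) {z p q : ℂ}
    (hz : t z = 0) (hp : t p ≠ 0) (hpz : t (p + z) ≠ 0) (hq : t q ≠ 0) (hqz : t (q + z) ≠ 0) :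
    logDeriv t (p + z) + logDeriv t q = logDeriv t p + logDeriv t (q + z) := by
  have hlog : ∀ x y, t x ≠ 0 → t y ≠ 0 → ∀ k ≠ 0,
      logDeriv (fun s => t (x + s) * t (y + s) * k) 0 = logDeriv t x + logDeriv t y := by
    intro x y hx hy k hk
    rw [logDeriv_mul_const _ _ hk, logDeriv_mul 0 (by simpa) (by simpa) (by fun_prop) (by fun_prop)]
    simp [logDeriv_apply, deriv_comp_const_add]
  rw [← hlog _ _ hpz hq _ (mul_ne_zero hp hqz), ← hlog _ _ hp hqz _ (mul_ne_zero hpz hq)]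
  exact congrArg (logDeriv · 0) (funext (h.mul_translate_eq hz p q))

lemma exists_translate_eq_exp_mul (h : ThreeTermRelation t) (ht : Differentiable ℂ t)
    (hne : ∃ u, t u ≠ 0) {z : ℂ} (hz : t z = 0) :
    ∃ α β, ∀ p, t (p + z) = β * exp (α * p) * t p := by
  have htz : Differentiable ℂ fun p => t (p + z) := by fun_prop
  obtain ⟨q, hq⟩ := exists_mul_ne_zero_of_differentiable ht htz hne
    (hne.elim fun u hu => ⟨u - z, by rwa [sub_add_cancel]⟩)
  obtain ⟨hq, hqz⟩ := mul_ne_zero_iff.1 hq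
  refine ⟨logDeriv t (q + z) - logDeriv t q,
    exists_eq_mul_exp_mul_of_logDeriv htz ht hqz hq fun p hpz hp => ?_⟩
  rw [logDeriv_apply, deriv_comp_add_const, ← logDeriv_apply]
  linear_combination h.logDeriv_translate ht hz hp hpz hq hqz

lemma deriv_zero_sq_mul (h : ThreeTermRelation t) (ht : Differentiable ℂ t) (a b : ℂ) :
    deriv t 0 ^ 2 * (t (a + b) * t (a - b)) =
      (deriv t b ^ 2 - deriv (deriv t) b * t b) * t a ^ 2 -
        (deriv t a ^ 2 - deriv (deriv t) a * t a) * t b ^ 2 := by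
  let P : ℂ → ℂ → ℂ := fun b c => t (b + c) * t (b - c)
  have hP : ∀ b, Differentiable ℂ (P b) := fun b => by fun_prop
  have hP_snd : ∀ b, deriv (deriv (P b)) 0 = 2 * (deriv (deriv t) b * t b - deriv t b ^ 2) :=
    deriv_deriv_comp_const_add_mul_comp_const_sub ht
  have hrel : (fun c => t (a + b) * t (a - b) * P 0 c) =
      fun c => t a ^ 2 * P b c - t b ^ 2 * P a c := by
    funext c
    have hc := h a b c 0
    simp only [add_zero, sub_zero] at hc
    simp only [P, zero_add, zero_sub, h.odd c]
    rw [add_comm c a, ← neg_sub a c, h.odd] at hc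
    linear_combination -hc
  have hsub : deriv (fun c => t a ^ 2 * P b c - t b ^ 2 * P a c) =
      fun c => t a ^ 2 * deriv (P b) c - t b ^ 2 * deriv (P a) c := by
    funext c
    rw [deriv_fun_sub (by fun_prop) (by fun_prop), deriv_const_mul_field, deriv_const_mul_field]
  have hderiv : t (a + b) * t (a - b) * deriv (deriv (P 0)) 0 =
      t a ^ 2 * deriv (deriv (P b)) 0 - t b ^ 2 * deriv (deriv (P a)) 0 := by
    have hsecond := congrArg (fun f => deriv (deriv f) 0) hrel
    simp only [deriv_const_mul_field'] at hsecond
    rwa [hsub, deriv_fun_sub ((hP b).deriv.differentiableAt.const_mul _)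
      ((hP a).deriv.differentiableAt.const_mul _), deriv_const_mul_field,
      deriv_const_mul_field] at hsecond
  simp only [hP_snd, h.map_zero] at hderiv
  linear_combination -(1 / 2) * hderiv

lemma logWeierstrassP_sub_mul (h : ThreeTermRelation t) (ht : Differentiable ℂ t) {a b : ℂ}
    (ha : t a ≠ 0) (hb : t b ≠ 0) :
    (logWeierstrassP t b - logWeierstrassP t a) * (t a * t b) ^ 2 =
      deriv t 0 ^ 2 * (t (a + b) * t (a - b)) := by
  rw [h.deriv_zero_sq_mul ht]
  linear_combination t a ^ 2 * logWeierstrassP_mul_sq ht hb - t b ^ 2 * logWeierstrassP_mul_sq ht ha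

lemma logDeriv_add (h : ThreeTermRelation t) (ht : Differentiable ℂ t) {a b : ℂ}
    (ha : t a ≠ 0) (hb : t b ≠ 0) (hab : t (a + b) ≠ 0) :
    2 * (logDeriv t (a + b) - logDeriv t a - logDeriv t b) *
        (logWeierstrassP t a - logWeierstrassP t b) =
      deriv (logWeierstrassP t) a - deriv (logWeierstrassP t) b := by
  have ht_at : ∀ c, t c ≠ 0 → HasDerivAt (fun s => t (c + s)) (logDeriv t c * t c) 0 :=
    fun c hc => .comp_const_add c 0 (by simpa using hasDerivAt_logDeriv_mul ht.differentiableAt hc)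
  have hP_at : ∀ c, t c ≠ 0 →
      HasDerivAt (fun s => logWeierstrassP t (c + s)) (deriv (logWeierstrassP t) c) 0 :=
    fun c hc => .comp_const_add c 0
      (by simpa using (differentiableAt_logWeierstrassP ht hc).hasDerivAt)
  have hsum_at : HasDerivAt (fun s => t (a + b + (s + s)))
      (logDeriv t (a + b) * t (a + b) * (1 + 1)) 0 :=
    HasDerivAt.comp (0 : ℂ) (h₂ := fun s => t (a + b + s)) (h := fun s => s + s)
      (by simpa using ht_at (a + b) hab) ((hasDerivAt_id' 0).add (hasDerivAt_id' 0))
  have hfactor : (fun s => (logWeierstrassP t (b + s) - logWeierstrassP t (a + s)) *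
      (t (a + s) * t (b + s)) ^ 2) =ᶠ[nhds 0]
      fun s => deriv t 0 ^ 2 * t (a - b) * t (a + b + (s + s)) := by
    filter_upwards [(ht_at a ha).continuousAt.eventually_ne (by simpa using ha),
      (ht_at b hb).continuousAt.eventually_ne (by simpa using hb)] with s has hbs
    rw [h.logWeierstrassP_sub_mul ht has hbs, add_sub_add_right_eq_sub, add_add_add_comm]
    ring
  have hderiv :=
    (((hP_at b hb).sub (hP_at a ha)).mul (((ht_at a ha).mul (ht_at b hb)).pow 2)).unique
    ((hsum_at.const_mul (deriv t 0 ^ 2 * t (a - b))).congr_of_eventuallyEq hfactor)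
  have hfactor_zero := h.logWeierstrassP_sub_mul ht ha hb
  simp only [Pi.mul_apply, Pi.pow_apply, Pi.sub_apply, add_zero] at hderiv
  apply mul_left_cancel₀ (pow_ne_zero 2 (mul_ne_zero ha hb))
  push_cast at hderiv
  linear_combination hderiv - 2 * logDeriv t (a + b) * hfactor_zero

lemma difference_invariant (h : ThreeTermRelation t) (ht : Differentiable ℂ t) {a b : ℂ}
    (ha : t a ≠ 0) (hb : t b ≠ 0) (hab : t (a - b) ≠ 0) :
    (logWeierstrassP t a + logWeierstrassP t b) *
          (logDeriv t (a - b) - logDeriv t a + logDeriv t b)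
        + 2 * logWeierstrassP t (a - b) * (logDeriv t a - logDeriv t b)
        - (1 / 2) * (deriv (logWeierstrassP t) a - deriv (logWeierstrassP t) b) =
      2 * logWeierstrassP t (a - b) * logDeriv t (a - b) + deriv (logWeierstrassP t) (a - b) := by
  have hba : t (b - a) ≠ 0 := by rwa [← neg_sub, h.odd, neg_ne_zero]
  have hb_eq := h.logDeriv_add ht ha hba (by rwa [add_sub_cancel])
  have ha_eq := h.logDeriv_add ht hab hb (by rwa [sub_add_cancel])
  rw [add_sub_cancel, ← neg_sub a b, odd_logDeriv_of_odd h.odd, even_logWeierstrassP h.odd,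
    odd_deriv_of_even (even_logWeierstrassP h.odd)] at hb_eq
  rw [sub_add_cancel] at ha_eq
  linear_combination (1 / 2) * hb_eq + (1 / 2) * ha_eq

end ThreeTermRelation

section JacobiTheta

open Real (pi)

variable {τ : ℂ}

lemma integral_jacobiTheta₂_term (n : ℤ) (τ : ℂ) :
    ∫ x in (0 : ℝ)..1, jacobiTheta₂_term n x τ = if n = 0 then 1 else 0 := by
  split_ifs with hn
  · simp [hn, jacobiTheta₂_term]
  · have hperiod : exp (2 * pi * I * n * (1 : ℝ)) = 1 :=
      exp_eq_one_iff.2 ⟨n, by push_cast; ring⟩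
    simp only [jacobiTheta₂_term, exp_add]
    rw [intervalIntegral.integral_mul_const,
      integral_exp_mul_complex (mul_ne_zero two_pi_I_ne_zero (Int.cast_ne_zero.2 hn)), hperiod]
    simp

lemma integral_jacobiTheta₂ (hτ : 0 < τ.im) : ∫ x in (0 : ℝ)..1, jacobiTheta₂ x τ = 1 := by
  have hsum := intervalIntegral.hasSum_integral_of_dominated_convergence
    (μ := MeasureTheory.volume) (a := 0) (b := 1)
    (F := fun (n : ℤ) (x : ℝ) => jacobiTheta₂_term n x τ) (f := fun x : ℝ => jacobiTheta₂ x τ)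
    (fun n _ => ‖jacobiTheta₂_term n 0 τ‖)
    (fun n => by
      unfold jacobiTheta₂_term
      exact Continuous.aestronglyMeasurable (by fun_prop))
    (fun n => .of_forall fun x _ => by simp [norm_jacobiTheta₂_term])
    (.of_forall fun x _ => ((summable_jacobiTheta₂_term_iff 0 τ).2 hτ).norm)
    (by simp)
    (.of_forall fun x _ => hasSum_jacobiTheta₂_term x hτ)
  simp only [integral_jacobiTheta₂_term] at hsum
  exact hsum.unique (hasSum_ite_eq 0 1)

lemma exists_jacobiTheta₂_ne_zero (hτ : 0 < τ.im) : ∃ x : ℝ, jacobiTheta₂ x τ ≠ 0 := by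
  by_contra! h
  simpa [h] using integral_jacobiTheta₂ hτ

/-- The general term of the theta function with characteristics `(a, b)`: the functions `θ₁`, `θ₂`,
`θ₃` have characteristics `(1/2, 1/2)`, `(1/2, 0)`, `(0, 0)`. -/
noncomputable def thetaCharTerm (a b u τ : ℂ) (k : ℤ) : ℂ :=
  exp (pi * I * τ * (k + a) ^ 2 + 2 * pi * I * (u + b) * (k + a))

lemma thetaCharTerm_eq_mul_jacobiTheta₂_term (a b u τ : ℂ) (k : ℤ) :
    thetaCharTerm a b u τ k =
      exp (pi * I * τ * a ^ 2 + 2 * pi * I * (u + b) * a) *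
        jacobiTheta₂_term k (u + b + a * τ) τ := by
  rw [thetaCharTerm, jacobiTheta₂_term, ← exp_add]
  ring_nf

lemma summable_norm_thetaCharTerm (a b u : ℂ) (hτ : 0 < τ.im) :
    Summable fun k => ‖thetaCharTerm a b u τ k‖ := by
  simp only [thetaCharTerm_eq_mul_jacobiTheta₂_term]
  exact (((summable_jacobiTheta₂_term_iff _ τ).2 hτ).mul_left _).norm

lemma theta1_eq_neg_tsum (u τ : ℂ) : theta1 u τ = -∑' k, thetaCharTerm (1 / 2) (1 / 2) u τ k := rfl

lemma theta2_eq_tsum (u τ : ℂ) : theta2 u τ = ∑' k, thetaCharTerm (1 / 2) 0 u τ k := by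
  simp only [theta2, thetaCharTerm, add_zero]

lemma theta3_eq_tsum (u τ : ℂ) : theta3 u τ = ∑' k, thetaCharTerm 0 0 u τ k := by
  simp only [theta3, thetaCharTerm, add_zero]

/-- The splitting of `ℤ × ℤ ∋ (k, m)` according to the parity of `k + m`, with `(i, j)` recovered
from `k + m + 1 = 2 i`, `k - m = 2 j + 1` in the odd case and from `k + m = 2 i`, `k - m = 2 j` in
the even case. -/
noncomputable def intProdParityEquiv : (ℤ × ℤ) ⊕ (ℤ × ℤ) ≃ ℤ × ℤ :=
  Equiv.ofBijective
    (Sum.elim (fun x => (x.1 + x.2, x.1 - x.2 - 1)) (fun x => (x.1 + x.2, x.1 - x.2))) <| by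
    constructor
    · rintro (⟨a, b⟩ | ⟨a, b⟩) (⟨c, d⟩ | ⟨c, d⟩) h <;>
        simp only [Sum.elim_inl, Sum.elim_inr, Prod.mk.injEq, Sum.inl.injEq, Sum.inr.injEq,
          reduceCtorEq] at h ⊢ <;> omega
    · rintro ⟨k, m⟩
      rcases Int.even_or_odd' (k + m) with ⟨i, hi | hi⟩
      · exact ⟨Sum.inr (i, k - i), by simp only [Sum.elim_inr, Prod.mk.injEq]; omega⟩
      · exact ⟨Sum.inl (i + 1, k - i - 1), by simp only [Sum.elim_inl, Prod.mk.injEq]; omega⟩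

lemma thetaCharTerm_mul_of_odd (a b τ : ℂ) (i j : ℤ) :
    thetaCharTerm (1 / 2) (1 / 2) (a + b) τ (i + j) *
        thetaCharTerm (1 / 2) (1 / 2) (a - b) τ (i - j - 1) =
      thetaCharTerm 0 0 (2 * a) (2 * τ) i * thetaCharTerm (1 / 2) 0 (2 * b) (2 * τ) j := by
  simp only [thetaCharTerm, ← exp_add]
  refine exp_eq_exp_iff_exists_int.2 ⟨i, ?_⟩
  push_cast
  ring

lemma thetaCharTerm_mul_of_even (a b τ : ℂ) (i j : ℤ) :
    thetaCharTerm (1 / 2) (1 / 2) (a + b) τ (i + j) *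
        thetaCharTerm (1 / 2) (1 / 2) (a - b) τ (i - j) =
      -(thetaCharTerm (1 / 2) 0 (2 * a) (2 * τ) i * thetaCharTerm 0 0 (2 * b) (2 * τ) j) := by
  have hsign : exp (i * (2 * pi * I) + pi * I) = -1 := by
    rw [exp_add, exp_int_mul_two_pi_mul_I, exp_pi_mul_I, one_mul]
  rw [← neg_one_mul, ← hsign]
  simp only [thetaCharTerm, ← exp_add]
  push_cast
  ring_nf

lemma theta1_add_mul_theta1_sub (hτ : 0 < τ.im) (a b : ℂ) :
    theta1 (a + b) τ * theta1 (a - b) τ =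
      theta3 (2 * a) (2 * τ) * theta2 (2 * b) (2 * τ) -
        theta2 (2 * a) (2 * τ) * theta3 (2 * b) (2 * τ) := by
  have hτ2 : 0 < (2 * τ).im := by simpa using hτ
  have hsum := summable_norm_thetaCharTerm (τ := τ) (1 / 2) (1 / 2) (hτ := hτ)
  have hsum2 := summable_norm_thetaCharTerm (τ := 2 * τ) (b := 0) (hτ := hτ2)
  have hpairs := intProdParityEquiv.summable_iff.2
    (summable_mul_of_summable_norm (hsum (a + b)) (hsum (a - b)))
  simp only [theta1_eq_neg_tsum, theta2_eq_tsum, theta3_eq_tsum, neg_mul_neg]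
  rw [tsum_mul_tsum_of_summable_norm (hsum _) (hsum _),
    tsum_mul_tsum_of_summable_norm (hsum2 0 _) (hsum2 (1 / 2) _),
    tsum_mul_tsum_of_summable_norm (hsum2 (1 / 2) _) (hsum2 0 _),
    ← intProdParityEquiv.tsum_eq, sub_eq_add_neg (∑' _, _), ← tsum_neg]
  refine (Summable.tsum_sum (hpairs.comp_injective Sum.inl_injective)
    (hpairs.comp_injective Sum.inr_injective)).trans (congrArg₂ _ ?_ ?_)
  · exact tsum_congr fun x => thetaCharTerm_mul_of_odd a b τ x.1 x.2
  · exact tsum_congr fun x => thetaCharTerm_mul_of_even a b τ x.1 x.2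

lemma threeTermRelation_theta1 (hτ : 0 < τ.im) : ThreeTermRelation fun v => theta1 v τ :=
  threeTermRelation_of_add_mul_sub (theta1_add_mul_theta1_sub hτ)

lemma theta1_eq_mul_jacobiTheta₂ (u τ : ℂ) : theta1 u τ =
    -(exp (pi * I * τ * (1 / 2) ^ 2 + 2 * pi * I * (u + 1 / 2) * (1 / 2)) *
      jacobiTheta₂ (u + 1 / 2 + 1 / 2 * τ) τ) := by
  rw [theta1_eq_neg_tsum, jacobiTheta₂, ← tsum_mul_left]
  simp only [thetaCharTerm_eq_mul_jacobiTheta₂_term]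

lemma differentiable_theta1 (hτ : 0 < τ.im) : Differentiable ℂ fun v => theta1 v τ := by
  have hJ : Differentiable ℂ fun z => jacobiTheta₂ z τ :=
    fun z => differentiableAt_jacobiTheta₂_fst z hτ
  simp only [theta1_eq_mul_jacobiTheta₂]
  have hJ_shift : Differentiable ℂ fun u => jacobiTheta₂ (u + 1 / 2 + 1 / 2 * τ) τ :=
    hJ.comp (f := fun u => u + 1 / 2 + 1 / 2 * τ) (by fun_prop)
  fun_prop

lemma exists_theta1_ne_zero (hτ : 0 < τ.im) : ∃ u, theta1 u τ ≠ 0 := by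
  obtain ⟨x, hx⟩ := exists_jacobiTheta₂_ne_zero hτ
  refine ⟨x - 1 / 2 - 1 / 2 * τ, ?_⟩
  rw [theta1_eq_mul_jacobiTheta₂, sub_right_comm, sub_add_cancel, sub_add_cancel]
  exact neg_ne_zero.2 (mul_ne_zero (exp_ne_zero _) hx)

lemma theta1_add_one (u τ : ℂ) : theta1 (u + 1) τ = -theta1 u τ := by
  have hterm : ∀ k, thetaCharTerm (1 / 2) (1 / 2) (u + 1) τ k =
      -thetaCharTerm (1 / 2) (1 / 2) u τ k := fun k => by
    rw [thetaCharTerm, thetaCharTerm, ← mul_neg_one, ← exp_pi_mul_I, ← exp_add]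
    exact exp_eq_exp_iff_exists_int.2 ⟨k, by ring⟩
  simp only [theta1_eq_neg_tsum, hterm, tsum_neg]

lemma theta1_add_tau (u τ : ℂ) :
    theta1 (u + τ) τ = -(exp (-pi * I * τ - 2 * pi * I * u) * theta1 u τ) := by
  have hterm : ∀ k, thetaCharTerm (1 / 2) (1 / 2) (u + τ) τ k =
      -exp (-pi * I * τ - 2 * pi * I * u) * thetaCharTerm (1 / 2) (1 / 2) u τ (k + 1) := fun k => by
    rw [thetaCharTerm, thetaCharTerm, ← mul_neg_one, ← exp_pi_mul_I, ← exp_add, ← exp_add]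
    refine exp_eq_exp_iff_exists_int.2 ⟨-1, ?_⟩
    push_cast
    ring
  have hshift : ∑' k, thetaCharTerm (1 / 2) (1 / 2) u τ (k + 1) =
      ∑' k, thetaCharTerm (1 / 2) (1 / 2) u τ k := (Equiv.addRight (1 : ℤ)).tsum_eq _
  simp only [theta1_eq_neg_tsum, hterm, tsum_mul_left, hshift]
  ring

lemma inLattice_of_theta1_eq_zero (hτ : 0 < τ.im) {z : ℂ} (hz : theta1 z τ = 0) :
    InLattice τ z := by
  obtain ⟨α, β, htrans⟩ : ∃ α β, ∀ p, theta1 (p + z) τ = β * exp (α * p) * theta1 p τ :=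
    (threeTermRelation_theta1 hτ).exists_translate_eq_exp_mul
      (differentiable_theta1 hτ) (exists_theta1_ne_zero hτ) hz
  obtain ⟨u, hu⟩ := exists_theta1_ne_zero hτ
  obtain ⟨q, rfl⟩ : ∃ q, u = q + z := ⟨u - z, (sub_add_cancel u z).symm⟩
  have hexp_one : exp α = 1 := by
    have hq := htrans (q + 1)
    rw [add_right_comm, theta1_add_one, theta1_add_one, mul_add, exp_add, mul_one] at hq
    apply mul_right_cancel₀ hu
    linear_combination hq + exp α * htrans q
  have hexp_tau : exp (-2 * pi * I * z) = exp (α * τ) := by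
    have hq := htrans (q + τ)
    have hsplit : -pi * I * τ - 2 * pi * I * (q + z) =
      (-pi * I * τ - 2 * pi * I * q) + -2 * pi * I * z := by ring
    rw [add_right_comm, theta1_add_tau, theta1_add_tau, hsplit, mul_add, exp_add, exp_add] at hq
    apply mul_right_cancel₀ (mul_ne_zero (exp_ne_zero (-pi * I * τ - 2 * pi * I * q)) hu)
    linear_combination
      -hq - exp (-pi * I * τ - 2 * pi * I * q) * exp (α * τ) * htrans q
  obtain ⟨k, hk⟩ := exp_eq_one_iff.1 hexp_one
  obtain ⟨n, hn⟩ := exp_eq_exp_iff_exists_int.1 hexp_tau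
  refine ⟨-n, -k, mul_left_cancel₀ two_pi_I_ne_zero ?_⟩
  rw [hk] at hn
  push_cast
  linear_combination -hn

lemma zeta1_neg (hτ : 0 < τ.im) (z : ℂ) : zeta1 (-z) τ = -zeta1 z τ :=
  odd_logDeriv_of_odd (threeTermRelation_theta1 hτ).odd z

lemma wp1_neg (hτ : 0 < τ.im) (z : ℂ) : wp1 (-z) τ = wp1 z τ :=
  even_logWeierstrassP (threeTermRelation_theta1 hτ).odd z

lemma zeta1_wp1_difference_invariant (hτ : 0 < τ.im) {a b : ℂ} (ha : ¬InLattice τ a)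
    (hb : ¬InLattice τ b) (hab : ¬InLattice τ (a - b)) :
    (wp1 a τ + wp1 b τ) * (zeta1 (a - b) τ - zeta1 a τ + zeta1 b τ)
        + 2 * wp1 (a - b) τ * (zeta1 a τ - zeta1 b τ) - (1 / 2) * (wp1' a τ - wp1' b τ) =
      2 * wp1 (a - b) τ * zeta1 (a - b) τ + wp1' (a - b) τ :=
  (threeTermRelation_theta1 hτ).difference_invariant (differentiable_theta1 hτ)
    (mt (inLattice_of_theta1_eq_zero hτ) ha) (mt (inLattice_of_theta1_eq_zero hτ) hb)
    (mt (inLattice_of_theta1_eq_zero hτ) hab)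

end JacobiTheta

/-- Elliptic Gibbons–Tsarev compatibility identity (Section 4): the identity expressing
the vanishing of F_{jk}(u), i.e. the compatibility of the elliptic Löwner equations
under the elliptic Gibbons–Tsarev system. -/
theorem elliptic_GT_compatibility_identity (σ u x y : ℂ) (hσ : 0 < σ.im)
    (hx : ¬ InLattice σ x) (hy : ¬ InLattice σ y)
    (hxy : ¬ InLattice σ (x - y))
    (hux : ¬ InLattice σ (u + x)) (huy : ¬ InLattice σ (u + y)) :
    (wp1 (u + y) σ - wp1 y σ) * (zeta1 (x - y) σ - zeta1 x σ)
      - (wp1 (u + x) σ - wp1 x σ) * (zeta1 (y - x) σ - zeta1 y σ)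
      + 2 * wp1 (y - x) σ
          * (-zeta1 (u + y) σ + zeta1 y σ + zeta1 (u + x) σ - zeta1 x σ)
      + (1 / 2) * (wp1' (u + y) σ - wp1' (u + x) σ - wp1' y σ + wp1' x σ)
      + (zeta1 (u + y) σ - zeta1 (u + x) σ + zeta1 x σ) * wp1 (u + y) σ
      - (zeta1 (u + x) σ - zeta1 (u + y) σ + zeta1 y σ) * wp1 (u + x) σ
      - zeta1 y σ * wp1 y σ + zeta1 x σ * wp1 x σ = 0 := by
  have hdiff : u + x - (u + y) = x - y := add_sub_add_left_eq_sub x y u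
  have invariant_xy := zeta1_wp1_difference_invariant hσ hx hy hxy
  have invariant_shifted := zeta1_wp1_difference_invariant hσ hux huy (by rwa [hdiff])
  rw [hdiff] at invariant_shifted
  rw [← neg_sub x y, zeta1_neg hσ, wp1_neg hσ]
  linear_combination invariant_shifted - invariant_xy
end

section
/- Derivative of S(u₁−u₂) along a common elliptic Löwner flow (identity (f201)): Let I ⊆ ℝ be an open interval, and let u₁, u₂, ξ, τ : I → ℂ be differentiable with τ taking values in the upper half-plane. Suppose that for a = 1,2 the elliptic Löwner equation holds: 4πi (du_a/dλ) = (−ζ₁(u_a + ξ, τ/2) + ζ₁(ξ, τ/2)) (dτ/dλ). Assume that at every point of I the values θ₁(u₁−u₂, τ), θ₄(u₁−u₂, τ), θ₁(u_a+ξ, τ), θ₄(u_a+ξ, τ) (a=1,2) and θ₁(u_a+ξ, τ/2) are nonzero. Then at every point of I: S'(u₁−u₂, τ)·(du₁/dλ − du₂/dλ) + Ṡ(u₁−u₂, τ)·(dτ/dλ) = (1/(4πi)) S'(u₁+ξ, τ) S'(u₂+ξ, τ) (dτ/dλ), where Ṡ(u,τ) := ∂_τθ₁(u,τ)/θ₁(u,τ)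 − ∂_τθ₄(u,τ)/θ₄(u,τ); i.e., d/dλ [S(u₁−u₂, τ)] = (1/(4πi)) S'(u₁+ξ, τ) S'(u₂+ξ, τ) dτ/dλ. -/
open Complex

/-- Ṡ(u,τ) = ∂_τθ₁(u,τ)/θ₁(u,τ) − ∂_τθ₄(u,τ)/θ₄(u,τ). -/
noncomputable def Sdot (u τ : ℂ) : ℂ :=
  deriv (fun s => theta1 u s) τ / theta1 u τ - deriv (fun s => theta4 u s) τ / theta4 u τ

/-!
Write `Θ_a = θ_a(·, τ/2)` and `θ_a = θ_a(·, τ)`. Multiplying two theta series at `τ/2` and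
splitting the index lattice by parity gives bilinear formulas such as
`Θ₁(x) Θ₁(y) = θ₃(x + y) θ₂(x - y) - θ₂(x + y) θ₃(x - y)`. Differentiating it at `y = 0` and
shifting by half a period evaluates the Wronskian `2 (θ₁' θ₄ - θ₁ θ₄') = Θ₁'(0) Θ₂`. Together with
`Θ₁ Θ₂(0) = 2 θ₁ θ₄` this gives `S' = c Θ₂ / Θ₁` with `c = Θ₁'(0) / Θ₂(0)`, and, by the heat
equation, `4πi Ṡ = (θ₁'' θ₄ - θ₁ θ₄'') / (θ₁ θ₄) = c Θ₂' / Θ₁`. Differentiating the bilinear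
formula along `(1, -1)` turns these expressions into the addition formula
`S'(x) S'(y) = S'(x - y) (ζ₁(y, τ/2) - ζ₁(x, τ/2)) + 4πi Ṡ(x - y)`. For `x = u₁ + ξ` and
`y = u₂ + ξ`, the Löwner equations identify `(ζ₁(y, τ/2) - ζ₁(x, τ/2)) dτ/dλ` with
`4πi (du₁/dλ - du₂/dλ)`.
-/

section

open scoped Real

/-- The theta function with characteristic `(a, 0)`, which treats `theta2` (`a = 1/2`) and `theta3`
(`a = 0`) uniformly; `theta1` and `theta4` are their translates by `1/2`. -/
noncomputable def thetaChar (a u τ : ℂ) : ℂ :=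
  ∑' k : ℤ, cexp (π * I * τ * (k + a) ^ 2 + 2 * π * I * u * (k + a))

lemma theta2_eq_thetaChar (u τ : ℂ) : theta2 u τ = thetaChar (1 / 2) u τ := rfl

lemma theta3_eq_thetaChar (u τ : ℂ) : theta3 u τ = thetaChar 0 u τ := by
  simp only [theta3, thetaChar, add_zero]

lemma theta1_eq_neg_theta2_add_half (u τ : ℂ) : theta1 u τ = -theta2 (u + 1 / 2) τ := rfl

lemma theta4_eq_theta3_add_half (u τ : ℂ) : theta4 u τ = theta3 (u + 1 / 2) τ := rfl

lemma thetaChar_add_one_left (a u τ : ℂ) : thetaChar (a + 1) u τ = thetaChar a u τ := by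
  unfold thetaChar
  rw [← (Equiv.addRight (1 : ℤ)).tsum_eq (fun k : ℤ ↦ cexp (_ * (k + a) ^ 2 + _ * (k + a)))]
  simp only [Equiv.coe_addRight, Int.cast_add, Int.cast_one, add_right_comm _ (1 : ℂ), add_assoc]

lemma thetaChar_add_one (a u τ : ℂ) :
    thetaChar a (u + 1) τ = cexp (2 * π * I * a) * thetaChar a u τ := by
  unfold thetaChar
  rw [← tsum_mul_left]
  refine tsum_congr fun k ↦ ?_
  have hexp : π * I * τ * (k + a) ^ 2 + 2 * π * I * (u + 1) * (k + a)
      = k * (2 * π * I) + (2 * π * I * a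
        + (π * I * τ * (k + a) ^ 2 + 2 * π * I * u * (k + a))) := by ring
  rw [hexp, exp_add, exp_int_mul_two_pi_mul_I, one_mul, exp_add]

lemma theta2_add_one (u τ : ℂ) : theta2 (u + 1) τ = -theta2 u τ := by
  rw [theta2_eq_thetaChar, thetaChar_add_one, ← theta2_eq_thetaChar,
    show 2 * π * I * (1 / 2) = π * I by ring, exp_pi_mul_I, neg_one_mul]

lemma theta3_add_one (u τ : ℂ) : theta3 (u + 1) τ = theta3 u τ := by
  rw [theta3_eq_thetaChar, thetaChar_add_one, mul_zero, exp_zero, one_mul, theta3_eq_thetaChar]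

lemma theta1_add_half (u τ : ℂ) : theta1 (u + 1 / 2) τ = theta2 u τ := by
  rw [theta1_eq_neg_theta2_add_half, add_assoc, add_halves, theta2_add_one, neg_neg]

/-- The exponential factor relating `thetaChar a` to `jacobiTheta₂`, used to transfer derivatives
from the latter to the former. -/
noncomputable def charFactor (a u τ : ℂ) : ℂ := cexp (π * I * a ^ 2 * τ + 2 * π * I * a * u)

lemma thetaChar_term_eq (a u τ : ℂ) (k : ℤ) :
    cexp (π * I * τ * (k + a) ^ 2 + 2 * π * I * u * (k + a))
      = charFactor a u τ * jacobiTheta₂_term k (u + a * τ) τ := by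
  rw [charFactor, jacobiTheta₂_term, ← exp_add]
  ring_nf

lemma thetaChar_eq_charFactor_mul (a u τ : ℂ) :
    thetaChar a u τ = charFactor a u τ * jacobiTheta₂ (u + a * τ) τ := by
  simp only [thetaChar, thetaChar_term_eq, tsum_mul_left, jacobiTheta₂]

lemma summable_norm_thetaChar_term (a u : ℂ) {τ : ℂ} (hτ : 0 < τ.im) :
    Summable fun k : ℤ ↦ ‖cexp (π * I * τ * (k + a) ^ 2 + 2 * π * I * u * (k + a))‖ := by
  simp_rw [thetaChar_term_eq]
  exact (((summable_jacobiTheta₂_term_iff _ _).2 hτ).mul_left _).norm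

lemma div_two_im_pos {τ : ℂ} (hτ : 0 < τ.im) : 0 < (τ / 2).im := by
  rw [div_ofNat_im]
  exact half_pos hτ

/-- The splitting of `ℤ × ℤ` by the parity of the sum of the coordinates, each half being
parametrised by half the (shifted) sum and half the (shifted) difference. -/
def sumSubParityEquiv : (ℤ × ℤ) ⊕ (ℤ × ℤ) ≃ ℤ × ℤ where
  toFun := Sum.elim (fun p ↦ (p.1 + p.2, p.1 - p.2)) (fun p ↦ (p.1 + p.2 + 1, p.1 - p.2))
  invFun q := if (q.1 + q.2) % 2 = 0 then .inl ((q.1 + q.2) / 2, (q.1 - q.2) / 2)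
    else .inr ((q.1 + q.2) / 2, (q.1 - q.2) / 2)
  left_inv := by grind
  right_inv := by grind

lemma thetaChar_mul_thetaChar (a b x y : ℂ) {τ : ℂ} (hτ : 0 < τ.im) :
    thetaChar a x (τ / 2) * thetaChar b y (τ / 2)
      = thetaChar ((a + b) / 2) (x + y) τ * thetaChar ((a - b) / 2) (x - y) τ
        + thetaChar ((a + b + 1) / 2) (x + y) τ * thetaChar ((a - b + 1) / 2) (x - y) τ := by
  have hτ₂ := div_two_im_pos hτ
  have hsum (c d u v : ℂ) := summable_mul_of_summable_norm
    (summable_norm_thetaChar_term c u hτ) (summable_norm_thetaChar_term d v hτ)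
  have hmul (c d u v : ℂ) {σ : ℂ} (hσ : 0 < σ.im) := tsum_mul_tsum_of_summable_norm
    (summable_norm_thetaChar_term c u hσ) (summable_norm_thetaChar_term d v hσ)
  simp only [thetaChar, hmul _ _ _ _ hτ, hmul _ _ _ _ hτ₂]
  rw [← sumSubParityEquiv.tsum_eq]
  refine HasSum.tsum_eq (HasSum.sum ?_ ?_)
  · convert! (hsum ((a + b) / 2) ((a - b) / 2) (x + y) (x - y)).hasSum using 2 with p
    simp only [Function.comp, sumSubParityEquiv, Equiv.coe_fn_mk, Sum.elim_inl, ← exp_add]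
    congr 1; push_cast; ring
  · convert! (hsum ((a + b + 1) / 2) ((a - b + 1) / 2) (x + y) (x - y)).hasSum using 2 with p
    simp only [Function.comp, sumSubParityEquiv, Equiv.coe_fn_mk, Sum.elim_inr, ← exp_add]
    congr 1; push_cast; ring

lemma theta2_mul_theta2 (x y : ℂ) {τ : ℂ} (hτ : 0 < τ.im) :
    theta2 x (τ / 2) * theta2 y (τ / 2)
      = theta2 (x + y) τ * theta3 (x - y) τ + theta3 (x + y) τ * theta2 (x - y) τ := by
  have h := thetaChar_mul_thetaChar (1 / 2) (1 / 2) x y hτ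
  rw [show ((1 / 2 + 1 / 2) / 2 : ℂ) = 1 / 2 by norm_num,
    show ((1 / 2 + 1 / 2 + 1) / 2 : ℂ) = 0 + 1 by norm_num,
    show ((1 / 2 - 1 / 2) / 2 : ℂ) = 0 by norm_num,
    show ((1 / 2 - 1 / 2 + 1) / 2 : ℂ) = 1 / 2 by norm_num, thetaChar_add_one_left] at h
  simpa only [theta2_eq_thetaChar, theta3_eq_thetaChar] using h

lemma theta1_mul_theta1 (x y : ℂ) {τ : ℂ} (hτ : 0 < τ.im) :
    theta1 x (τ / 2) * theta1 y (τ / 2)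
      = theta3 (x + y) τ * theta2 (x - y) τ - theta2 (x + y) τ * theta3 (x - y) τ := by
  have h := theta2_mul_theta2 (x + 1 / 2) (y + 1 / 2) hτ
  rw [add_add_add_comm, add_halves, add_sub_add_right_eq_sub, theta2_add_one, theta3_add_one] at h
  simp only [theta1_eq_neg_theta2_add_half]
  linear_combination h

lemma theta2_mul_theta2_zero (u : ℂ) {τ : ℂ} (hτ : 0 < τ.im) :
    theta2 u (τ / 2) * theta2 0 (τ / 2) = 2 * (theta2 u τ * theta3 u τ) := by
  have h := theta2_mul_theta2 u 0 hτ
  rw [add_zero, sub_zero] at h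
  linear_combination h

lemma theta1_mul_theta2_zero (u : ℂ) {τ : ℂ} (hτ : 0 < τ.im) :
    theta1 u (τ / 2) * theta2 0 (τ / 2) = 2 * (theta1 u τ * theta4 u τ) := by
  simp only [theta1_eq_neg_theta2_add_half, theta4_eq_theta3_add_half]
  linear_combination -theta2_mul_theta2_zero (u + 1 / 2) hτ

lemma hasDerivAt_charFactor_fst (a u τ : ℂ) :
    HasDerivAt (charFactor a · τ) (charFactor a u τ * (2 * π * I * a)) u := by
  simpa using! (((hasDerivAt_id u).const_mul (2 * π * I * a)).const_add (π * I * a ^ 2 * τ)).cexp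

lemma hasDerivAt_charFactor_snd (a u τ : ℂ) :
    HasDerivAt (charFactor a u) (charFactor a u τ * (π * I * a ^ 2)) τ := by
  simpa using! (((hasDerivAt_id τ).const_mul (π * I * a ^ 2)).add_const (2 * π * I * a * u)).cexp

lemma hasSum_jacobiTheta₂_fderiv_snd (z : ℂ) {τ : ℂ} (hτ : 0 < τ.im) :
    HasSum (fun n : ℤ ↦ π * I * n ^ 2 * jacobiTheta₂_term n z τ)
      (jacobiTheta₂_fderiv z τ (0, 1)) := by
  have h := (ContinuousLinearMap.apply ℂ ℂ ((0, 1) : ℂ × ℂ)).hasSum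
    (hasSum_jacobiTheta₂_term_fderiv z hτ)
  simpa [jacobiTheta₂_term_fderiv, jacobiTheta₂_term, mul_comm, Function.comp_def] using h

lemma jacobiTheta₂_fderiv_apply (z : ℂ) {τ : ℂ} (hτ : 0 < τ.im) (b c : ℂ) :
    jacobiTheta₂_fderiv z τ (b, c)
      = b * jacobiTheta₂' z τ + c * jacobiTheta₂_fderiv z τ (0, 1) := by
  have hfst : jacobiTheta₂_fderiv z τ (1, 0) = jacobiTheta₂' z τ :=
    (((hasFDerivAt_jacobiTheta₂ z hτ).comp z (hasFDerivAt_prodMk_left z τ)).hasDerivAt :).unique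
      (hasDerivAt_jacobiTheta₂_fst z hτ)
  rw [← hfst, ← smul_eq_mul, ← smul_eq_mul, ← map_smul, ← map_smul, ← map_add]
  simp

lemma hasDerivAt_jacobiTheta₂'_term_fst (n : ℤ) (z τ : ℂ) :
    HasDerivAt (jacobiTheta₂'_term n · τ)
      (4 * π * I * (π * I * n ^ 2 * jacobiTheta₂_term n z τ)) z := by
  have h := ((((hasDerivAt_id z).const_mul (2 * π * I * n : ℂ)).add_const
    (π * I * n ^ 2 * τ)).cexp).const_mul (2 * π * I * n : ℂ)
  convert! h using 1
  simp only [jacobiTheta₂_term, id]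
  ring

lemma hasDerivAt_jacobiTheta₂'_fst (z : ℂ) {τ : ℂ} (hτ : 0 < τ.im) :
    HasDerivAt (jacobiTheta₂' · τ) (4 * π * I * jacobiTheta₂_fderiv z τ (0, 1)) z := by
  obtain ⟨S, hz⟩ := exists_gt |z.im|
  have hopen : IsOpen {w : ℂ | |w.im| < S} := isOpen_lt (by fun_prop) continuous_const
  have hbound : Summable fun n : ℤ ↦
      2 * π * |(n : ℝ)| * Real.exp (-π * (τ.im * n ^ 2 - 2 * S * |(n : ℝ)|)) := by
    simpa only [mul_assoc, pow_one, Int.cast_abs] using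
      (summable_pow_mul_jacobiTheta₂_term_bound S hτ 1).mul_left (2 * π)
  have hdiff (n : ℤ) : DifferentiableOn ℂ (jacobiTheta₂'_term n · τ) {w | |w.im| < S} :=
    fun w _ ↦ (hasDerivAt_jacobiTheta₂'_term_fst n w τ).differentiableAt.differentiableWithinAt
  have hle (n : ℤ) (w : ℂ) (hw : |w.im| < S) := norm_jacobiTheta₂'_term_le hτ hw.le le_rfl n
  simp only [Int.cast_abs] at hle
  have hsum := hasSum_deriv_of_summable_norm hbound hdiff hopen hle hz
  simp only [(hasDerivAt_jacobiTheta₂'_term_fst _ z τ).deriv] at hsum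
  rw [((hasSum_jacobiTheta₂_fderiv_snd z hτ).mul_left _).unique hsum]
  exact ((differentiableOn_tsum_of_summable_norm hbound hdiff hopen hle).differentiableAt
    (hopen.mem_nhds hz)).hasDerivAt

section heatEquation

variable (a u : ℂ) {τ : ℂ} (hτ : 0 < τ.im)
include hτ

lemma hasDerivAt_thetaChar_fst :
    HasDerivAt (thetaChar a · τ)
      (charFactor a u τ * (2 * π * I * a) * jacobiTheta₂ (u + a * τ) τ
        + charFactor a u τ * jacobiTheta₂' (u + a * τ) τ) u := by
  simp_rw [thetaChar_eq_charFactor_mul]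
  exact (hasDerivAt_charFactor_fst a u τ).mul
    ((hasDerivAt_jacobiTheta₂_fst _ hτ).comp_add_const u (a * τ))

lemma hasDerivAt_thetaChar_snd :
    HasDerivAt (thetaChar a u)
      (charFactor a u τ * (π * I * a ^ 2) * jacobiTheta₂ (u + a * τ) τ
        + charFactor a u τ * (a * jacobiTheta₂' (u + a * τ) τ
          + jacobiTheta₂_fderiv (u + a * τ) τ (0, 1))) τ := by
  have hline : HasDerivAt (fun s : ℂ ↦ (u + a * s, s)) (a, 1) τ := by
    simpa using (((hasDerivAt_id τ).const_mul a).const_add u).prodMk (hasDerivAt_id τ)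
  have hJ := HasFDerivAt.comp_hasDerivAt (f := fun s : ℂ ↦ (u + a * s, s)) τ
    (hasFDerivAt_jacobiTheta₂ (u + a * τ) hτ) hline
  rw [jacobiTheta₂_fderiv_apply _ hτ, one_mul] at hJ
  rw [funext (thetaChar_eq_charFactor_mul a u)]
  exact (hasDerivAt_charFactor_snd a u τ).mul hJ

lemma thetaChar_heat_equation :
    4 * π * I * deriv (thetaChar a u) τ = deriv (deriv (thetaChar a · τ)) u := by
  have hE := hasDerivAt_charFactor_fst a u τ
  have hJ := (hasDerivAt_jacobiTheta₂_fst _ hτ).comp_add_const u (a * τ)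
  have hJ' := (hasDerivAt_jacobiTheta₂'_fst _ hτ).comp_add_const u (a * τ)
  rw [(hasDerivAt_thetaChar_snd a u hτ).deriv,
    funext fun v ↦ (hasDerivAt_thetaChar_fst a v hτ).deriv]
  refine Eq.trans ?_ (((hE.mul_const (2 * π * I * a)).mul hJ).add (hE.mul hJ')).deriv.symm
  ring

lemma differentiable_thetaChar : Differentiable ℂ (thetaChar a · τ) :=
  fun u ↦ (hasDerivAt_thetaChar_fst a u hτ).differentiableAt

lemma differentiable_theta2 : Differentiable ℂ (theta2 · τ) := differentiable_thetaChar (1 / 2) hτ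

lemma differentiable_theta3 : Differentiable ℂ (theta3 · τ) := by
  simpa only [theta3_eq_thetaChar] using differentiable_thetaChar 0 hτ

lemma differentiable_theta1_s5 : Differentiable ℂ (theta1 · τ) := by
  simp_rw [theta1_eq_neg_theta2_add_half]
  exact ((differentiable_theta2 hτ).comp (differentiable_id.add_const _)).neg

lemma differentiable_theta4 : Differentiable ℂ (theta4 · τ) :=
  (differentiable_theta3 hτ).comp (differentiable_id.add_const _)

end heatEquation

lemma deriv_theta1_fst (τ : ℂ) :
    deriv (theta1 · τ) = fun u ↦ -deriv (theta2 · τ) (u + 1 / 2) := by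
  funext u
  simp_rw [theta1_eq_neg_theta2_add_half]
  rw [deriv.fun_neg, deriv_comp_add_const (theta2 · τ)]

lemma deriv_theta4_fst (τ : ℂ) : deriv (theta4 · τ) = fun u ↦ deriv (theta3 · τ) (u + 1 / 2) :=
  funext <| deriv_comp_add_const (theta3 · τ) (1 / 2)

lemma theta1_heat_equation (u : ℂ) {τ : ℂ} (hτ : 0 < τ.im) :
    4 * π * I * deriv (theta1 u) τ = deriv (deriv (theta1 · τ)) u := by
  have hfst : deriv (deriv (theta1 · τ)) u = -deriv (deriv (theta2 · τ)) (u + 1 / 2) := by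
    rw [deriv_theta1_fst, deriv.fun_neg, deriv_comp_add_const (deriv (theta2 · τ))]
  have hsnd : deriv (theta1 u) τ = -deriv (theta2 (u + 1 / 2)) τ := deriv.fun_neg
  rw [hfst, hsnd, mul_neg]
  exact congrArg _ (thetaChar_heat_equation (1 / 2) (u + 1 / 2) hτ)

lemma theta4_heat_equation (u : ℂ) {τ : ℂ} (hτ : 0 < τ.im) :
    4 * π * I * deriv (theta4 u) τ = deriv (deriv (theta4 · τ)) u := by
  rw [deriv_theta4_fst, deriv_comp_add_const (deriv (theta3 · τ))]
  have hchar : theta3 = thetaChar 0 := funext₂ theta3_eq_thetaChar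
  change 4 * π * I * deriv (theta3 (u + 1 / 2)) τ = _
  rw [hchar]
  exact thetaChar_heat_equation 0 (u + 1 / 2) hτ

section identities

variable {τ : ℂ} (hτ : 0 < τ.im)
include hτ

lemma wronskian_theta2_theta3 (u : ℂ) :
    2 * (theta2 u τ * deriv (theta3 · τ) u - deriv (theta2 · τ) u * theta3 u τ)
      = deriv (theta1 · (τ / 2)) 0 * theta1 u (τ / 2) := by
  have hleft :=
    (differentiable_theta1_s5 (div_two_im_pos hτ) 0).hasDerivAt.const_mul (theta1 u (τ / 2))
  have hadd₂ := (differentiable_theta2 hτ (u + 0)).hasDerivAt.comp_const_add u 0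
  have hadd₃ := (differentiable_theta3 hτ (u + 0)).hasDerivAt.comp_const_add u 0
  have hsub₂ := (differentiable_theta2 hτ (u - 0)).hasDerivAt.comp_const_sub u 0
  have hsub₃ := (differentiable_theta3 hτ (u - 0)).hasDerivAt.comp_const_sub u 0
  rw [funext fun y ↦ theta1_mul_theta1 u y hτ] at hleft
  have h := hleft.unique ((hadd₃.mul hsub₂).sub (hadd₂.mul hsub₃))
  simp only [add_zero, sub_zero] at h
  linear_combination -h

lemma wronskian_theta1_theta4 (u : ℂ) :
    2 * (deriv (theta1 · τ) u * theta4 u τ - theta1 u τ * deriv (theta4 · τ) u)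
      = deriv (theta1 · (τ / 2)) 0 * theta2 u (τ / 2) := by
  rw [← theta1_add_half, ← wronskian_theta2_theta3 hτ, deriv_theta1_fst, deriv_theta4_fst,
    theta1_eq_neg_theta2_add_half, theta4_eq_theta3_add_half]
  ring

lemma deriv_wronskian_theta1_theta4 (u : ℂ) :
    2 * (deriv (deriv (theta1 · τ)) u * theta4 u τ - theta1 u τ * deriv (deriv (theta4 · τ)) u)
      = deriv (theta1 · (τ / 2)) 0 * deriv (theta2 · (τ / 2)) u := by
  have hright := (differentiable_theta2 (div_two_im_pos hτ) u).hasDerivAt.const_mul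
    (deriv (theta1 · (τ / 2)) 0)
  have h₁ := (differentiable_theta1_s5 hτ u).hasDerivAt
  have h₄ := (differentiable_theta4 hτ u).hasDerivAt
  have h₁' := ((differentiable_theta1_s5 hτ).deriv u).hasDerivAt
  have h₄' := ((differentiable_theta4 hτ).deriv u).hasDerivAt
  rw [← funext (wronskian_theta1_theta4 hτ)] at hright
  have h := hright.unique (((h₁'.mul h₄).sub (h₁.mul h₄')).const_mul 2)
  linear_combination -h

lemma deriv_theta2_mul_theta2_zero (u : ℂ) :
    deriv (theta2 · (τ / 2)) u * theta2 0 (τ / 2)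
      = 2 * (deriv (theta2 · τ) u * theta3 u τ + theta2 u τ * deriv (theta3 · τ) u) := by
  have hleft :=
    (differentiable_theta2 (div_two_im_pos hτ) u).hasDerivAt.mul_const (theta2 0 (τ / 2))
  have h₂ := (differentiable_theta2 hτ u).hasDerivAt
  have h₃ := (differentiable_theta3 hτ u).hasDerivAt
  rw [funext fun v ↦ theta2_mul_theta2_zero v hτ] at hleft
  exact hleft.unique ((h₂.mul h₃).const_mul 2)

lemma two_point_wronskian_theta1 (x y : ℂ) :
    deriv (theta1 · (τ / 2)) x * theta1 y (τ / 2) - theta1 x (τ / 2) * deriv (theta1 · (τ / 2)) y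
      = 2 * (theta3 (x + y) τ * deriv (theta2 · τ) (x - y)
        - theta2 (x + y) τ * deriv (theta3 · τ) (x - y)) := by
  have hτ₂ := div_two_im_pos hτ
  have hx := (differentiable_theta1_s5 hτ₂ (x + 0)).hasDerivAt.comp_const_add x 0
  have hy := (differentiable_theta1_s5 hτ₂ (y - 0)).hasDerivAt.comp_const_sub y 0
  have hline : HasDerivAt (fun t : ℂ ↦ x - y + 2 * t) 2 0 := by
    simpa using ((hasDerivAt_id (0 : ℂ)).const_mul 2).const_add (x - y)
  have h₂ := (differentiable_theta2 hτ _).hasDerivAt.comp 0 hline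
  have h₃ := (differentiable_theta3 hτ _).hasDerivAt.comp 0 hline
  have hprod : (fun t ↦ theta1 (x + t) (τ / 2) * theta1 (y - t) (τ / 2)) = fun t ↦
      theta3 (x + y) τ * theta2 (x - y + 2 * t) τ
        - theta2 (x + y) τ * theta3 (x - y + 2 * t) τ := by
    funext t
    rw [theta1_mul_theta1 _ _ hτ, show x + t + (y - t) = x + y by ring,
      show x + t - (y - t) = x - y + 2 * t by ring]
  have hleft := hx.mul hy
  change HasDerivAt (fun t ↦ theta1 (x + t) (τ / 2) * theta1 (y - t) (τ / 2)) _ _ at hleft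
  rw [hprod] at hleft
  have h := hleft.unique ((h₂.const_mul (theta3 (x + y) τ)).sub (h₃.const_mul (theta2 (x + y) τ)))
  simp only [add_zero, sub_zero, mul_zero] at h
  linear_combination h

-- By the product formulas both sides are linear in `theta2 (x + y) τ` and `theta3 (x + y) τ`;
-- in each coefficient only the Wronskian of `theta2` and `theta3` at `x - y` is left.
lemma theta_half_addition_formula (x y : ℂ) :
    theta2 0 (τ / 2) * (deriv (theta2 · (τ / 2)) (x - y) * (theta1 x (τ / 2) * theta1 y (τ / 2))
        - theta2 (x - y) (τ / 2) * (deriv (theta1 · (τ / 2)) x * theta1 y (τ / 2)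
          - theta1 x (τ / 2) * deriv (theta1 · (τ / 2)) y))
      = deriv (theta1 · (τ / 2)) 0 * theta1 (x - y) (τ / 2)
          * (theta2 x (τ / 2) * theta2 y (τ / 2)) := by
  rw [two_point_wronskian_theta1 hτ, theta1_mul_theta1 x y hτ, theta2_mul_theta2 x y hτ,
    ← wronskian_theta2_theta3 hτ]
  linear_combination
    (theta3 (x + y) τ * theta2 (x - y) τ - theta2 (x + y) τ * theta3 (x - y) τ)
        * deriv_theta2_mul_theta2_zero hτ (x - y)
      - 2 * (theta3 (x + y) τ * deriv (theta2 · τ) (x - y)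
        - theta2 (x + y) τ * deriv (theta3 · τ) (x - y)) * theta2_mul_theta2_zero (x - y) hτ

lemma theta_half_ne_zero {u : ℂ} (h₁ : theta1 u τ ≠ 0) (h₄ : theta4 u τ ≠ 0) :
    theta1 u (τ / 2) ≠ 0 ∧ theta2 0 (τ / 2) ≠ 0 := by
  rw [← mul_ne_zero_iff, theta1_mul_theta2_zero u hτ]
  exact mul_ne_zero two_ne_zero (mul_ne_zero h₁ h₄)

lemma Sp_eq_theta_half {u : ℂ} (h₁ : theta1 u τ ≠ 0) (h₄ : theta4 u τ ≠ 0) :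
    Sp u τ = deriv (theta1 · (τ / 2)) 0 * theta2 u (τ / 2)
      / (theta1 u (τ / 2) * theta2 0 (τ / 2)) := by
  rw [theta1_mul_theta2_zero u hτ, ← wronskian_theta1_theta4 hτ, Sp, zeta1, zeta4]
  field_simp

lemma Sdot_eq_theta_half {u : ℂ} (h₁ : theta1 u τ ≠ 0) (h₄ : theta4 u τ ≠ 0) :
    4 * π * I * Sdot u τ = deriv (theta1 · (τ / 2)) 0 * deriv (theta2 · (τ / 2)) u
      / (theta1 u (τ / 2) * theta2 0 (τ / 2)) := by
  rw [theta1_mul_theta2_zero u hτ, ← deriv_wronskian_theta1_theta4 hτ, ← theta1_heat_equation u hτ,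
    ← theta4_heat_equation u hτ, Sdot]
  field_simp

lemma Sp_mul_Sp {x y : ℂ} (hx₁ : theta1 x τ ≠ 0) (hx₄ : theta4 x τ ≠ 0)
    (hy₁ : theta1 y τ ≠ 0) (hy₄ : theta4 y τ ≠ 0)
    (hxy₁ : theta1 (x - y) τ ≠ 0) (hxy₄ : theta4 (x - y) τ ≠ 0) :
    Sp x τ * Sp y τ
      = Sp (x - y) τ * (zeta1 y (τ / 2) - zeta1 x (τ / 2)) + 4 * π * I * Sdot (x - y) τ := by
  obtain ⟨hx, h₀⟩ := theta_half_ne_zero hτ hx₁ hx₄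
  have hy := (theta_half_ne_zero hτ hy₁ hy₄).1
  have hxy := (theta_half_ne_zero hτ hxy₁ hxy₄).1
  rw [Sdot_eq_theta_half hτ hxy₁ hxy₄, Sp_eq_theta_half hτ hx₁ hx₄, Sp_eq_theta_half hτ hy₁ hy₄,
    Sp_eq_theta_half hτ hxy₁ hxy₄, zeta1, zeta1]
  field_simp
  linear_combination -deriv (theta1 · (τ / 2)) 0 * theta_half_addition_formula hτ x y

end identities

theorem Loewner_flow_S_derivative_general {I : Set ℝ} {u₁ u₂ ξ τ u₁' u₂' τ' : ℝ → ℂ}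
    (hu₁ : ∀ l ∈ I, HasDerivWithinAt u₁ (u₁' l) I l)
    (hu₂ : ∀ l ∈ I, HasDerivWithinAt u₂ (u₂' l) I l)
    (hτ : ∀ l ∈ I, HasDerivWithinAt τ (τ' l) I l)
    (hup : ∀ l ∈ I, 0 < (τ l).im)
    (hL₁ : ∀ l ∈ I, 4 * π * Complex.I * u₁' l
      = (-zeta1 (u₁ l + ξ l) (τ l / 2) + zeta1 (ξ l) (τ l / 2)) * τ' l)
    (hL₂ : ∀ l ∈ I, 4 * π * Complex.I * u₂' l
      = (-zeta1 (u₂ l + ξ l) (τ l / 2) + zeta1 (ξ l) (τ l / 2)) * τ' l)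
    (h₁ : ∀ l ∈ I, theta1 (u₁ l - u₂ l) (τ l) ≠ 0)
    (h₄ : ∀ l ∈ I, theta4 (u₁ l - u₂ l) (τ l) ≠ 0)
    (h₁₁ : ∀ l ∈ I, theta1 (u₁ l + ξ l) (τ l) ≠ 0)
    (h₁₄ : ∀ l ∈ I, theta4 (u₁ l + ξ l) (τ l) ≠ 0)
    (h₂₁ : ∀ l ∈ I, theta1 (u₂ l + ξ l) (τ l) ≠ 0)
    (h₂₄ : ∀ l ∈ I, theta4 (u₂ l + ξ l) (τ l) ≠ 0) :
    ∀ l ∈ I,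
      Sp (u₁ l - u₂ l) (τ l) * (u₁' l - u₂' l) + Sdot (u₁ l - u₂ l) (τ l) * τ' l
        = 1 / (4 * π * Complex.I) * Sp (u₁ l + ξ l) (τ l) * Sp (u₂ l + ξ l) (τ l) * τ' l := by
  intro l hl
  have hdiff : u₁ l + ξ l - (u₂ l + ξ l) = u₁ l - u₂ l := add_sub_add_right_eq_sub ..
  have hS := Sp_mul_Sp (hup l hl) (h₁₁ l hl) (h₁₄ l hl) (h₂₁ l hl) (h₂₄ l hl)
    (hdiff ▸ h₁ l hl) (hdiff ▸ h₄ l hl)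
  rw [hdiff] at hS
  rw [mul_assoc (1 / _), hS]
  field_simp
  linear_combination Sp (u₁ l - u₂ l) (τ l) * (hL₁ l hl - hL₂ l hl)

end

/-- Derivative of S(u₁−u₂) along a common elliptic Löwner flow (identity (f201)). -/
theorem Loewner_flow_S_derivative
    (I : Set ℝ) (hIopen : IsOpen I) (hIinterval : I.OrdConnected)
    (u1 u2 ξ τ u1' u2' ξ' τ' : ℝ → ℂ)
    (hu1 : ∀ l ∈ I, HasDerivAt u1 (u1' l) l)
    (hu2 : ∀ l ∈ I, HasDerivAt u2 (u2' l) l)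
    (hξ : ∀ l ∈ I, HasDerivAt ξ (ξ' l) l)
    (hτ : ∀ l ∈ I, HasDerivAt τ (τ' l) l)
    (hup : ∀ l ∈ I, 0 < (τ l).im)
    (hL1 : ∀ l ∈ I, 4 * (Real.pi : ℂ) * Complex.I * u1' l
      = (-zeta1 (u1 l + ξ l) (τ l / 2) + zeta1 (ξ l) (τ l / 2)) * τ' l)
    (hL2 : ∀ l ∈ I, 4 * (Real.pi : ℂ) * Complex.I * u2' l
      = (-zeta1 (u2 l + ξ l) (τ l / 2) + zeta1 (ξ l) (τ l / 2)) * τ' l)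
    (h1 : ∀ l ∈ I, theta1 (u1 l - u2 l) (τ l) ≠ 0)
    (h2 : ∀ l ∈ I, theta4 (u1 l - u2 l) (τ l) ≠ 0)
    (h3 : ∀ l ∈ I, theta1 (u1 l + ξ l) (τ l) ≠ 0)
    (h4 : ∀ l ∈ I, theta4 (u1 l + ξ l) (τ l) ≠ 0)
    (h5 : ∀ l ∈ I, theta1 (u2 l + ξ l) (τ l) ≠ 0)
    (h6 : ∀ l ∈ I, theta4 (u2 l + ξ l) (τ l) ≠ 0)
    (h7 : ∀ l ∈ I, theta1 (u1 l + ξ l) (τ l / 2) ≠ 0)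
    (h8 : ∀ l ∈ I, theta1 (u2 l + ξ l) (τ l / 2) ≠ 0) :
    ∀ l ∈ I,
      Sp (u1 l - u2 l) (τ l) * (u1' l - u2' l) + Sdot (u1 l - u2 l) (τ l) * τ' l
        = 1 / (4 * (Real.pi : ℂ) * Complex.I)
            * Sp (u1 l + ξ l) (τ l) * Sp (u2 l + ξ l) (τ l) * τ' l := by
  exact Loewner_flow_S_derivative_general (fun l hl ↦ (hu1 l hl).hasDerivWithinAt)
    (fun l hl ↦ (hu2 l hl).hasDerivWithinAt) (fun l hl ↦ (hτ l hl).hasDerivWithinAt)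
    hup hL1 hL2 h1 h2 h3 h4 h5 h6
end

section
/- Conserved densities for semi-Hamiltonian diagonal systems (Section 7): Let U ⊆ ℝ^N be open with coordinates λ₁,…,λ_N. Let φ₁,…,φ_N : U → ℝ be C¹ and Γ_{ij} : U → ℝ (i ≠ j) be functions such that ∂φ_i/∂λ_j = Γ_{ij}(φ_j − φ_i) for all i ≠ j. Let P : U → ℝ be C² and satisfy ∂²P/(∂λ_i∂λ_j) = Γ_{ij} ∂P/∂λ_i + Γ_{ji} ∂P/∂λ_j for all i ≠ j. Then: (a) for all i ≠ j, ∂/∂λ_j (φ_i ∂P/∂λ_i) = ∂/∂λ_i (φ_j ∂P/∂λ_j) on U (so locally there exists A with ∂A/∂λ_i = φ_i ∂P/∂λ_i for all i); (b) if A : U → ℝ is C¹ with ∂A/∂λ_i = φ_i ∂P/∂λ_i for all i, and λ : V → U is a C¹ map on an open set V ⊆ ℝ² with coordinates (t₀, t) satisfying ∂λ_i/∂t = φ_i(λ) ∂λ_i/∂t₀ for all i, then ∂(P∘λ)/∂t = ∂(A∘λ)/∂t₀ on V, i.e., P is the density of a conserved quantity. -/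
/-!
By the product rule, `∂_j(φ_i ∂_i P) = φ_i ∂_j∂_i P + ∂_i P ∂_j φ_i`. Inserting the equations for
`∂_j φ_i` and `∂_j∂_i P`, the terms `Γ_{ij} φ_i ∂_i P` cancel and
`Γ_{ij} φ_j ∂_i P + Γ_{ji} φ_i ∂_j P` remains, which is symmetric in `i` and `j`.

If `∂_i A = φ_i ∂_i P`, the chain rule along a solution `λ` gives
`∂_t P = ∑_i ∂_i P ∂_t λ_i = ∑_i ∂_i P φ_i ∂_{t₀} λ_i = ∑_i ∂_i A ∂_{t₀} λ_i = ∂_{t₀} A`.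
-/

theorem fderiv_comp_pi_apply {𝕜 E F ι : Type*} [NontriviallyNormedField 𝕜]
    [NormedAddCommGroup E] [NormedSpace 𝕜 E] [NormedAddCommGroup F] [NormedSpace 𝕜 F]
    [Fintype ι] [DecidableEq ι] {f : (ι → 𝕜) → F} {g : E → ι → 𝕜} {x : E}
    (hf : DifferentiableAt 𝕜 f (g x)) (hg : DifferentiableAt 𝕜 g x) (v : E) :
    fderiv 𝕜 (fun y => f (g y)) x v =
      ∑ i, fderiv 𝕜 (fun y => g y i) x v • fderiv 𝕜 f (g x) (Pi.single i 1) := by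
  calc fderiv 𝕜 (fun y => f (g y)) x v
    _ = fderiv 𝕜 f (g x) (fderiv 𝕜 g x v) := by
      rw [fderiv_fun_comp x hf hg, ContinuousLinearMap.comp_apply]
    _ = ∑ i, fderiv 𝕜 g x v i • fderiv 𝕜 f (g x) (Pi.single i 1) := by
      conv_lhs => rw [pi_eq_sum_univ' (fderiv 𝕜 g x v)]
      simp only [map_sum, map_smul]
    _ = ∑ i, fderiv 𝕜 (fun y => g y i) x v • fderiv 𝕜 f (g x) (Pi.single i 1) := by
      simp only [fderiv_apply hg, ContinuousLinearMap.comp_apply, ContinuousLinearMap.proj_apply]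

section PartialDerivatives

variable {d : ℕ} {f g : (Fin d → ℝ) → ℝ} {x : Fin d → ℝ}

theorem pd_mul (hf : DifferentiableAt ℝ f x) (hg : DifferentiableAt ℝ g x) (j : Fin d) :
    pd j (fun y => f y * g y) x = f x * pd j g x + g x * pd j f x := by
  simp [pd, fderiv_fun_mul hf hg]

theorem pd_comp {m : ℕ} {u : (Fin m → ℝ) → (Fin d → ℝ)} {t : Fin m → ℝ}
    (hf : DifferentiableAt ℝ f (u t)) (hu : DifferentiableAt ℝ u t) (k : Fin m) :
    pd k (fun s => f (u s)) t = ∑ i, pd k (fun s => u s i) t * pd i f (u t) :=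
  fderiv_comp_pi_apply hf hu (Pi.single k 1)

theorem differentiableOn_pd {U : Set (Fin d → ℝ)} (hU : IsOpen U) (hf : ContDiffOn ℝ 2 f U)
    (i : Fin d) : DifferentiableOn ℝ (pd i f) U :=
  ((hf.fderiv_of_isOpen hU one_add_one_eq_two.le).differentiableOn one_ne_zero).clm_apply
    (differentiableOn_const _)

end PartialDerivatives

section DiagonalSystems

variable {N : ℕ} {φ : Fin N → (Fin N → ℝ) → ℝ} {P : (Fin N → ℝ) → ℝ}

theorem pd_speed_mul_pd_density {Γ : Fin N → Fin N → (Fin N → ℝ) → ℝ} {x : Fin N → ℝ}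
    {i j : Fin N} (hφ : DifferentiableAt ℝ (φ i) x) (hP : DifferentiableAt ℝ (pd i P) x)
    (hΓ : pd j (φ i) x = Γ i j x * (φ j x - φ i x))
    (hPΓ : pd j (pd i P) x = Γ j i x * pd j P x + Γ i j x * pd i P x) :
    pd j (fun y => φ i y * pd i P y) x =
      Γ i j x * φ j x * pd i P x + Γ j i x * φ i x * pd j P x := by
  rw [pd_mul hφ hP, hΓ, hPΓ]
  ring

theorem pd_density_comp_eq_pd_flux_comp {A : (Fin N → ℝ) → ℝ} {d : ℕ} {k l : Fin d}
    {u : (Fin d → ℝ) → (Fin N → ℝ)} {t : Fin d → ℝ} (hP : DifferentiableAt ℝ P (u t))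
    (hA : DifferentiableAt ℝ A (u t)) (hu : DifferentiableAt ℝ u t)
    (hAP : ∀ i, pd i A (u t) = φ i (u t) * pd i P (u t))
    (hsys : ∀ i, pd l (fun s => u s i) t = φ i (u t) * pd k (fun s => u s i) t) :
    pd l (fun s => P (u s)) t = pd k (fun s => A (u s)) t := by
  rw [pd_comp hP hu, pd_comp hA hu]
  refine Finset.sum_congr rfl fun i _ => ?_
  rw [hsys, hAP]
  ring

theorem conserved_densities_semiHamiltonian_general {U : Set (Fin N → ℝ)} (hU : IsOpen U)
    (hφ : ∀ i, DifferentiableOn ℝ (φ i) U) {Γ : Fin N → Fin N → (Fin N → ℝ) → ℝ}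
    (hΓ : ∀ i j, i ≠ j → ∀ x ∈ U, pd j (φ i) x = Γ i j x * (φ j x - φ i x))
    (hP : DifferentiableOn ℝ P U) (hdP : ∀ i, DifferentiableOn ℝ (pd i P) U)
    (hPΓ : ∀ i j, i ≠ j → ∀ x ∈ U,
      pd i (pd j P) x = Γ i j x * pd i P x + Γ j i x * pd j P x) :
    (∀ i j, i ≠ j → ∀ x ∈ U,
      pd j (fun y => φ i y * pd i P y) x = pd i (fun y => φ j y * pd j P y) x) ∧
    (∀ A : (Fin N → ℝ) → ℝ, DifferentiableOn ℝ A U →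
      (∀ i, ∀ x ∈ U, pd i A x = φ i x * pd i P x) →
      ∀ {d : ℕ} (k l : Fin d) (V : Set (Fin d → ℝ)), IsOpen V →
      ∀ u : (Fin d → ℝ) → (Fin N → ℝ), DifferentiableOn ℝ u V → Set.MapsTo u V U →
      (∀ i, ∀ t ∈ V, pd l (fun s => u s i) t = φ i (u t) * pd k (fun s => u s i) t) →
      ∀ t ∈ V, pd l (fun s => P (u s)) t = pd k (fun s => A (u s)) t) := by
  refine ⟨fun i j hij x hx => ?_, fun A hA hAP d k l V hV u hu hmaps hsys t ht => ?_⟩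
  · have hUx := hU.mem_nhds hx
    have expand {a b : Fin N} (hab : a ≠ b) : pd b (fun y => φ a y * pd a P y) x =
        Γ a b x * φ b x * pd a P x + Γ b a x * φ a x * pd b P x :=
      pd_speed_mul_pd_density ((hφ a).differentiableAt hUx) ((hdP a).differentiableAt hUx)
        (hΓ a b hab x hx) (hPΓ b a hab.symm x hx)
    rw [expand hij, expand hij.symm, add_comm]
  · have hUt := hU.mem_nhds (hmaps ht)
    exact pd_density_comp_eq_pd_flux_comp (hP.differentiableAt hUt) (hA.differentiableAt hUt)
      (hu.differentiableAt (hV.mem_nhds ht)) (fun i => hAP i _ (hmaps ht)) (fun i => hsys i t ht)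

end DiagonalSystems

/-- Conserved densities for semi-Hamiltonian diagonal systems of hydrodynamic type
(Section 7): any C² solution `P` of `∂²P/(∂λ_i∂λ_j) = Γ_{ij}∂P/∂λ_i + Γ_{ji}∂P/∂λ_j`
is the density of a conserved quantity. -/
theorem conserved_densities_semiHamiltonian
    (N : ℕ)
    (U : Set (Fin N → ℝ)) (hU : IsOpen U)
    (φ : Fin N → (Fin N → ℝ) → ℝ)
    (hφC1 : ∀ i, ContDiffOn ℝ 1 (φ i) U)
    (Γ : Fin N → Fin N → (Fin N → ℝ) → ℝ)
    (hΓ : ∀ i j, i ≠ j → ∀ x ∈ U, pd j (φ i) x = Γ i j x * (φ j x - φ i x))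
    (P : (Fin N → ℝ) → ℝ)
    (hPC2 : ContDiffOn ℝ 2 P U)
    (hP : ∀ i j, i ≠ j → ∀ x ∈ U,
      pd i (pd j P) x = Γ i j x * pd i P x + Γ j i x * pd j P x) :
    -- (a) the closedness condition: ∂_{λ_j}(φ_i ∂_{λ_i}P) = ∂_{λ_i}(φ_j ∂_{λ_j}P)
    (∀ i j, i ≠ j → ∀ x ∈ U,
      pd j (fun y => φ i y * pd i P y) x = pd i (fun y => φ j y * pd j P y) x)
    ∧
    -- (b) P is the density of a conserved quantity
    (∀ A : (Fin N → ℝ) → ℝ, ContDiffOn ℝ 1 A U →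
      (∀ i, ∀ x ∈ U, pd i A x = φ i x * pd i P x) →
      ∀ V : Set (Fin 2 → ℝ), IsOpen V →
      ∀ lam : (Fin 2 → ℝ) → (Fin N → ℝ), ContDiffOn ℝ 1 lam V → Set.MapsTo lam V U →
      (∀ i, ∀ t ∈ V,
        pd 1 (fun s => lam s i) t = φ i (lam t) * pd 0 (fun s => lam s i) t) →
      ∀ t ∈ V, pd 1 (fun s => P (lam s)) t = pd 0 (fun s => A (lam s)) t) := by
  obtain ⟨closed, conserved⟩ := conserved_densities_semiHamiltonian_general hU
    (fun i => (hφC1 i).differentiableOn one_ne_zero) hΓ (hPC2.differentiableOn two_ne_zero)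
    (differentiableOn_pd hU hPC2) hP
  exact ⟨closed, fun A hA hAP V hV lam hlam => conserved A (hA.differentiableOn one_ne_zero) hAP
    0 1 V hV lam (hlam.differentiableOn one_ne_zero)⟩
end
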